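/- Let q, r, s, t be nonnegative real numbers with qt ≥ rs, q + r > 0, s + t > 0, and q < r. Define I(q,r,s,t) := ∫_{[−1,1]²} max(q·x₁ + r·x₂, 0)·max(s·x₁ + t·x₂, 0) dx₁ dx₂. Then I(q,r,s,t) = (2/3)(qs + rt) + q²(qt − 3rs)/(24r²) + s²(3qt − rs)/(24t²). (Note that the hypotheses force r > 0 and t > 0, so the formula is well defined.) -/

import Mathlib

open MeasureTheory

/-! After dividing by `r` and `t`, the integrand is `max (a x + y) 0 * max (b x + y) 0` with
`-1 ≤ b ≤ a ≤ 1`. On a slice of fixed `x` it vanishes below the larger of the two zeros `-a x` and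
`-b x`, which lies in `[-1, 1]`, and is a quadratic above it. For `x ≥ 0` the larger zero is
`-b x`, so the slice integral is a cubic in `x`; the reflection `x ↦ -x` turns the left half of the
square into the right half for the slopes `(-b, -a)`. -/

lemma setIntegral_Icc_prod_Icc_eq_intervalIntegral {E : Type*} [NormedAddCommGroup E]
    [NormedSpace ℝ E] {f : ℝ × ℝ → E} {a b c d : ℝ} (hab : a ≤ b) (hcd : c ≤ d)
    (hf : ContinuousOn f (Set.Icc a b ×ˢ Set.Icc c d)) :
    ∫ p in Set.Icc a b ×ˢ Set.Icc c d, f p = ∫ x in a..b, ∫ y in c..d, f (x, y) := by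
  have hint := hf.integrableOn_compact (μ := volume) (isCompact_Icc.prod isCompact_Icc)
  rw [Measure.volume_eq_prod] at hint ⊢
  simp only [setIntegral_prod _ hint, integral_Icc_eq_integral_Ioc,
    intervalIntegral.integral_of_le hab, intervalIntegral.integral_of_le hcd]

lemma integral_cubic (a b c₀ c₁ c₂ c₃ : ℝ) :
    ∫ x in a..b, (c₀ + c₁ * x + c₂ * x ^ 2 + c₃ * x ^ 3) =
      c₀ * (b - a) + c₁ * (b ^ 2 - a ^ 2) / 2 + c₂ * (b ^ 3 - a ^ 3) / 3 +
        c₃ * (b ^ 4 - a ^ 4) / 4 := by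
  have integrable {f : ℝ → ℝ} (hf : Continuous f) : IntervalIntegrable f volume a b :=
    hf.intervalIntegrable a b
  rw [intervalIntegral.integral_add (integrable (by fun_prop)) (integrable (by fun_prop)),
    intervalIntegral.integral_add (integrable (by fun_prop)) (integrable (by fun_prop)),
    intervalIntegral.integral_add (integrable (by fun_prop)) (integrable (by fun_prop))]
  simp only [intervalIntegral.integral_const, intervalIntegral.integral_const_mul,
    intervalIntegral.integral_const_mul c₁ fun x => x, integral_id, integral_pow, smul_eq_mul]
  ring

lemma max_mul_add_mul_zero {K : Type*} [Field K] [LinearOrder K] [IsStrictOrderedRing K]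
    {d : K} (hd : 0 < d) (c x y : K) :
    max (c * x + d * y) 0 = d * max (c / d * x + y) 0 := by
  rw [mul_max_of_nonneg _ _ hd.le, mul_zero, mul_add, ← mul_assoc, mul_div_cancel₀ c hd.ne']

lemma integral_max_add_mul_max_add {A B c d : ℝ} (hBA : B ≤ A) (hc : c ≤ -B) (hd : -B ≤ d) :
    ∫ y in c..d, max (A + y) 0 * max (B + y) 0 = ∫ y in (-B)..d, (A + y) * (B + y) := by
  have hcont : Continuous fun y : ℝ => max (A + y) 0 * max (B + y) 0 := by fun_prop
  have below : ∫ y in c..(-B), max (A + y) 0 * max (B + y) 0 = 0 := by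
    refine intervalIntegral.integral_zero_ae (.of_forall fun y hy => ?_)
    rw [Set.uIoc_of_le hc] at hy
    rw [max_eq_right (by linarith [hy.2] : B + y ≤ 0), mul_zero]
  have above : ∫ y in (-B)..d, max (A + y) 0 * max (B + y) 0 =
      ∫ y in (-B)..d, (A + y) * (B + y) := by
    refine intervalIntegral.integral_congr fun y hy => ?_
    rw [Set.uIcc_of_le hd] at hy
    simp only [max_eq_left (by linarith [hy.1] : 0 ≤ A + y),
      max_eq_left (by linarith [hy.1] : 0 ≤ B + y)]
  rw [← intervalIntegral.integral_add_adjacent_intervals (hcont.intervalIntegrable c (-B))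
    (hcont.intervalIntegrable (-B) d), below, above, zero_add]

lemma integral_neg_add_mul_add (A B d : ℝ) :
    ∫ y in (-B)..d, (A + y) * (B + y) = (A - B) * (B + d) ^ 2 / 2 + (B + d) ^ 3 / 3 := by
  have expand (y : ℝ) : (A + y) * (B + y) = A * B + (A + B) * y + 1 * y ^ 2 + 0 * y ^ 3 := by ring
  simp only [expand, integral_cubic]
  ring

lemma integral_max_mul_max_right_half {a b : ℝ} (hb : -1 ≤ b) (hb' : b ≤ 1) (hba : b ≤ a) :
    ∫ x in (0 : ℝ)..1, ∫ y in (-1 : ℝ)..1, max (a * x + y) 0 * max (b * x + y) 0 =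
      1 / 3 + (a + b) / 4 + a * b / 3 + b ^ 2 * (3 * a - b) / 24 := by
  have slice : ∀ x ∈ Set.uIcc (0 : ℝ) 1,
      ∫ y in (-1 : ℝ)..1, max (a * x + y) 0 * max (b * x + y) 0 =
        1 / 3 + (a + b) / 2 * x + a * b * x ^ 2 + b ^ 2 * (3 * a - b) / 6 * x ^ 3 := by
    intro x hx
    obtain ⟨hx₀, hx₁⟩ := Set.uIcc_of_le (zero_le_one' ℝ) ▸ hx
    have order : b * x ≤ a * x := mul_le_mul_of_nonneg_right hba hx₀
    have zero_ge : -1 ≤ -(b * x) := neg_le_neg (mul_le_one₀ hb' hx₀ hx₁)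
    have zero_le : -(b * x) ≤ 1 := by
      simpa only [neg_mul] using mul_le_one₀ (neg_le.mp hb) hx₀ hx₁
    rw [integral_max_add_mul_max_add order zero_ge zero_le, integral_neg_add_mul_add]
    ring
  rw [intervalIntegral.integral_congr slice, integral_cubic]
  ring

lemma integral_max_mul_max_left_half {a b : ℝ} (ha : -1 ≤ a) (ha' : a ≤ 1) (hba : b ≤ a) :
    ∫ x in (-1 : ℝ)..0, ∫ y in (-1 : ℝ)..1, max (a * x + y) 0 * max (b * x + y) 0 =
      1 / 3 - (a + b) / 4 + a * b / 3 + a ^ 2 * (a - 3 * b) / 24 := by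
  calc ∫ x in (-1 : ℝ)..0, ∫ y in (-1 : ℝ)..1, max (a * x + y) 0 * max (b * x + y) 0
      = ∫ x in (0 : ℝ)..1, ∫ y in (-1 : ℝ)..1, max (a * -x + y) 0 * max (b * -x + y) 0 := by
        rw [intervalIntegral.integral_comp_neg (fun x => ∫ y in (-1 : ℝ)..1,
          max (a * x + y) 0 * max (b * x + y) 0), neg_zero]
    _ = ∫ x in (0 : ℝ)..1, ∫ y in (-1 : ℝ)..1, max (-b * x + y) 0 * max (-a * x + y) 0 := by
        simp only [mul_neg, neg_mul, mul_comm (max (-(b * _) + _) 0)]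
    _ = 1 / 3 - (a + b) / 4 + a * b / 3 + a ^ 2 * (a - 3 * b) / 24 := by
        rw [integral_max_mul_max_right_half (neg_le_neg ha') (neg_le.mp ha) (neg_le_neg hba)]
        ring

lemma integral_max_mul_max_square {a b : ℝ} (hb : -1 ≤ b) (hba : b ≤ a) (ha : a ≤ 1) :
    ∫ x in (-1 : ℝ)..1, ∫ y in (-1 : ℝ)..1, max (a * x + y) 0 * max (b * x + y) 0 =
      2 / 3 * (a * b + 1) + a ^ 2 * (a - 3 * b) / 24 + b ^ 2 * (3 * a - b) / 24 := by
  have hcont : Continuous fun x : ℝ =>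
      ∫ y in (-1 : ℝ)..1, max (a * x + y) 0 * max (b * x + y) 0 :=
    intervalIntegral.continuous_parametric_intervalIntegral_of_continuous' (by fun_prop) _ _
  rw [← intervalIntegral.integral_add_adjacent_intervals (hcont.intervalIntegrable (-1) 0)
    (hcont.intervalIntegrable 0 1), integral_max_mul_max_left_half (hb.trans hba) ha hba,
    integral_max_mul_max_right_half hb (hba.trans ha) hba]
  ring

theorem stmt18_general {q r s t : ℝ} (hr : 0 < r) (ht : 0 < t) (hs : -t ≤ s) (hq : q ≤ r)
    (hdet : r * s ≤ q * t) :
    ∫ p in (Set.Icc (-1 : ℝ) 1) ×ˢ (Set.Icc (-1 : ℝ) 1),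
        (max (q * p.1 + r * p.2) 0) * (max (s * p.1 + t * p.2) 0) =
      (2 / 3) * (q * s + r * t) + q ^ 2 * (q * t - 3 * (r * s)) / (24 * r ^ 2) +
        s ^ 2 * (3 * (q * t) - r * s) / (24 * t ^ 2) := by
  have hb : -1 ≤ s / t := by rwa [le_div_iff₀ ht, neg_one_mul]
  have hba : s / t ≤ q / r := by rwa [div_le_div_iff₀ ht hr, mul_comm s]
  have ha : q / r ≤ 1 := (div_le_one hr).mpr hq
  rw [setIntegral_Icc_prod_Icc_eq_intervalIntegral (by norm_num) (by norm_num) (by fun_prop)]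
  simp only [max_mul_add_mul_zero hr, max_mul_add_mul_zero ht,
    mul_mul_mul_comm r _ t _, intervalIntegral.integral_const_mul]
  rw [integral_max_mul_max_square hb hba ha]
  field_simp

/-- for q,r,s,t ≥ 0 with qt ≥ rs, q + r > 0, s + t > 0, q < r,
∫_{[−1,1]²} max(q x₁ + r x₂, 0) max(s x₁ + t x₂, 0) dx
  = (2/3)(qs + rt) + q²(qt − 3rs)/(24r²) + s²(3qt − rs)/(24t²). -/
theorem stmt18 (q r s t : ℝ) (hq : 0 ≤ q) (hr : 0 ≤ r) (hs : 0 ≤ s) (ht : 0 ≤ t)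
    (hdet : r * s ≤ q * t) (hqr : 0 < q + r) (hst : 0 < s + t) (h1 : q < r) :
    ∫ p in (Set.Icc (-1 : ℝ) 1) ×ˢ (Set.Icc (-1 : ℝ) 1),
        (max (q * p.1 + r * p.2) 0) * (max (s * p.1 + t * p.2) 0) =
      (2 / 3) * (q * s + r * t) + q ^ 2 * (q * t - 3 * (r * s)) / (24 * r ^ 2) +
        s ^ 2 * (3 * (q * t) - r * s) / (24 * t ^ 2) := by
  have ht' : 0 < (q + r) * t := by linarith [mul_pos (hq.trans_lt h1) hst]
  exact stmt18_general (hq.trans_lt h1) (pos_of_mul_pos_right ht' hqr.le) (by linarith) h1.le hdet
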